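/- Let f : [0,∞) → ℝ be nondecreasing with f(0) ≥ 0, let y > 0, and let g be an affine function with g(0) ≥ 0, g(y) = f(y), and g(x) ≥ f(x) for all x ≥ 0. Then for every z ≥ y, f(z) ≤ g(z) ≤ (z/y)·f(z). In particular, a supporting line of a nonnegative nondecreasing concave function at the point y provides a (1+ε)-approximation of f at every z ∈ [y, (1+ε)·y]. -/

import Mathlib

/-!
Beyond `y` the function `f` stays between `f y = g y` and `g`, so the slope of `g` is nonnegative.
An affine function `g` with nonnegative coefficients satisfies `g (t * y) ≤ t * g y` for `t ≥ 1`.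
Hence `g z ≤ t * g y = t * f y ≤ t * f z` whenever `y ≤ z ≤ t * y`; both upper bounds are
instances of this, with `t = z / y` and `t = 1 + ε`.
-/

theorem affine_le_mul_affine {R : Type*} [CommSemiring R] [PartialOrder R] [IsOrderedRing R]
    {m d t y z : R} (hm : 0 ≤ m) (hd : 0 ≤ d) (ht : 1 ≤ t) (hzt : z ≤ t * y) :
    m * z + d ≤ t * (m * y + d) :=
  calc m * z + d ≤ m * (t * y) + t * d :=
        add_le_add (mul_le_mul_of_nonneg_left hzt hm) (le_mul_of_one_le_left hd ht)
    _ = t * (m * y + d) := by ring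

theorem slope_nonneg_of_isMinOn {R : Type*} [Ring R] [PartialOrder R] [IsOrderedRing R]
    {f : R → R} {m d y : R} (hmin : IsMinOn f (Set.Ici y) y) (hgy : m * y + d = f y)
    (hub : ∀ x, y ≤ x → f x ≤ m * x + d) : 0 ≤ m := by
  have hy_succ : y ≤ y + 1 := le_add_of_nonneg_right zero_le_one
  have hg : m * y + d ≤ m * y + d + m :=
    calc m * y + d = f y := hgy
      _ ≤ f (y + 1) := hmin hy_succ
      _ ≤ m * (y + 1) + d := hub _ hy_succ
      _ = m * y + d + m := by rw [mul_add_one, add_right_comm]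
  exact nonneg_of_le_add_right hg

theorem affine_le_mul_of_isMinOn {R : Type*} [CommRing R] [PartialOrder R] [IsOrderedRing R]
    {f : R → R} {m d t y z : R} (hmin : IsMinOn f (Set.Ici y) y) (hd : 0 ≤ d)
    (hgy : m * y + d = f y) (hub : ∀ x, y ≤ x → f x ≤ m * x + d)
    (ht : 1 ≤ t) (hyz : y ≤ z) (hzt : z ≤ t * y) : m * z + d ≤ t * f z :=
  calc m * z + d ≤ t * (m * y + d) :=
        affine_le_mul_affine (slope_nonneg_of_isMinOn hmin hgy hub) hd ht hzt
    _ = t * f y := by rw [hgy]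
    _ ≤ t * f z := mul_le_mul_of_nonneg_left (hmin hyz) (zero_le_one.trans ht)

theorem supporting_line_approximation_general
    {𝕜 : Type*} [Field 𝕜] [LinearOrder 𝕜] [IsStrictOrderedRing 𝕜]
    {f : 𝕜 → 𝕜} {m d y : 𝕜} (hmin : IsMinOn f (Set.Ici y) y) (hy : 0 < y) (hd : 0 ≤ d)
    (hgy : m * y + d = f y) (hub : ∀ x, y ≤ x → f x ≤ m * x + d) :
    (∀ z, y ≤ z → f z ≤ m * z + d ∧ m * z + d ≤ (z / y) * f z) ∧
    (∀ t z, y ≤ z → z ≤ t * y → m * z + d ≤ t * f z) := by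
  have happrox (t z : 𝕜) (hyz : y ≤ z) (hzt : z ≤ t * y) : m * z + d ≤ t * f z :=
    affine_le_mul_of_isMinOn hmin hd hgy hub
      ((le_mul_iff_one_le_left hy).1 (hyz.trans hzt)) hyz hzt
  exact ⟨fun z hyz => ⟨hub z hyz, happrox _ z hyz (div_mul_cancel₀ z hy.ne').ge⟩, happrox⟩

/-- **Key approximation estimate for supporting lines.** Let `f : [0,∞) → ℝ` be
nondecreasing with `f 0 ≥ 0`, let `y > 0`, and let `g(x) = m·x + d` be an affine function
with `g(0) = d ≥ 0`, `g(y) = f(y)`, and `g(x) ≥ f(x)` for all `x ≥ 0`. Then for every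
`z ≥ y` we have `f(z) ≤ g(z) ≤ (z/y)·f(z)`; in particular, for every `ε ≥ 0`, `g` is a
`(1+ε)`-approximation of `f` at every `z ∈ [y, (1+ε)·y]`. -/
theorem supporting_line_approximation
    (f : ℝ → ℝ) (hmono : MonotoneOn f (Set.Ici 0)) (hf0 : 0 ≤ f 0)
    (y : ℝ) (hy : 0 < y) (m d : ℝ) (hd : 0 ≤ d)
    (hgy : m * y + d = f y)
    (hub : ∀ x, 0 ≤ x → f x ≤ m * x + d) :
    (∀ z, y ≤ z → f z ≤ m * z + d ∧ m * z + d ≤ (z / y) * f z) ∧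
    (∀ ε : ℝ, 0 ≤ ε → ∀ z, y ≤ z → z ≤ (1 + ε) * y →
      m * z + d ≤ (1 + ε) * f z) := by
  have hmin : IsMinOn f (Set.Ici y) y := fun _ hx => hmono hy.le (hy.le.trans hx) hx
  have ⟨hbounds, happrox⟩ :=
    supporting_line_approximation_general hmin hy hd hgy fun x hx => hub x (hy.le.trans hx)
  exact ⟨hbounds, fun ε _ => happrox (1 + ε)⟩
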